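/- Suppose instead that the edge probability p = p(n) satisfies q(log n + ω(n))/(α_min n) ≤ p ≤ 1, where ω(n) → ∞ and α_min = min{α_i : i ∈ [q]}. Then with high probability the perfect matching color profile of G consists of all vectors: for every vector (m_1,…,m_q) of nonnegative integers with m_1+⋯+m_q = n there exists a perfect matching M of G with |M ∩ Q_i| = m_i for all i ∈ [q]. -/

import Mathlib

open MeasureTheory Filter Finset Asymptotics

/-- Discrete measurable structure on edge states: `none` = non-edge, `some i` = edge of color `cᵢ`. -/
instance (q : ℕ) : MeasurableSpace (Option (Fin q)) := ⊤

/-- Distribution of the state of a single pair: non-edge with probability `1-p`,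
an edge of color `cᵢ` with probability `αᵢ·p`. -/
noncomputable def colorM (q : ℕ) (α : Fin q → ℝ) (p : ℝ) : Measure (Option (Fin q)) :=
  ENNReal.ofReal (1 - p) • Measure.dirac none +
    ∑ i : Fin q, ENNReal.ofReal (α i * p) • Measure.dirac (some i)

/-- The randomly colored random bipartite graph on parts `A = B = Fin n`:
independently, each pair `(a,b)` is a non-edge with probability `1-p` and an
edge of color `cᵢ` with probability `αᵢ·p`.  A sample is a function
`f : Fin n × Fin n → Option (Fin q)`. -/
noncomputable def graphM (n q : ℕ) (α : Fin q → ℝ) (p : ℝ) :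
    Measure (Fin n × Fin n → Option (Fin q)) :=
  Measure.pi fun _ => colorM q α p

/-!
If a balanced bipartite graph has no perfect matching, take an inclusion-minimal violator `S` of
Hall's condition, on the `A`-side or on the `B`-side. Its neighborhood `T` has exactly one vertex
less and each vertex of `T` has at least two neighbors in `S`; choosing the side well,
`2 * #T < n`. If each edge is present independently with probability at least `r` and at most `s`,
the expected number of such pairs is dominated by the isolated vertices (`T = ∅`), so that a
perfect matching fails to exist with probability at most `4 e² n exp (-n r)`, provided `(e n s)²` is
at most `exp (n r / 3)`.

To realize a color profile `m`, prescribe the colors first: color `A` with `m i` vertices of each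
color `i` and keep only those edges whose color is that of their endpoint in `A`. A perfect
matching of the remaining graph has profile `m`. Since there are `O(n ^ (q - 1))` profiles, the
union bound costs `n ^ q exp (-n r)` with `r = α_min p`, which is `exp (-q ω)` under the hypothesis
`n α_min p ≥ q (log n + ω)`.
-/

section HallObstruction

variable {A B : Type*} [Fintype B] {H : A → B → Prop} {S S' : Finset A} {T : Finset B} {n : ℕ}

open Classical in
/-- The neighborhood of a set `S` of left vertices in the bipartite graph with adjacency relation
`H`. -/
noncomputable def neighbors (H : A → B → Prop) (S : Finset A) : Finset B :=
  {b | ∃ a ∈ S, H a b}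

lemma mem_neighbors {b : B} : b ∈ neighbors H S ↔ ∃ a ∈ S, H a b := by
  simp [neighbors]

lemma neighbors_mono (h : S ⊆ S') : neighbors H S ⊆ neighbors H S' := fun b hb ↦ by
  obtain ⟨a, ha, hab⟩ := mem_neighbors.mp hb
  exact mem_neighbors.mpr ⟨a, h ha, hab⟩

/-- `S` violates Hall's condition. -/
def IsDeficient (H : A → B → Prop) (S : Finset A) : Prop :=
  #(neighbors H S) < #S

/-- The configuration around an inclusion-minimal violator `S` of Hall's condition: all edges at
`S` end in `T`, a set with one vertex less, and each vertex of `T` is joined to at least two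
vertices of `S`. -/
structure IsHallObstruction (H : A → B → Prop) (S : Finset A) (T : Finset B) : Prop where
  card_eq : #S = #T + 1
  not_adj : ∀ a ∈ S, ∀ b ∉ T, ¬ H a b
  exists_pair : ∀ b ∈ T, ∃ P ∈ S.powersetCard 2, ∀ a ∈ P, H a b

lemma card_le_card_neighbors_erase_of_minimal [DecidableEq A] (hS : Minimal (IsDeficient H) S)
    {a : A} (ha : a ∈ S) : #S ≤ #(neighbors H (S.erase a)) + 1 := by
  have h : ¬ IsDeficient H (S.erase a) := hS.not_prop_of_lt (erase_ssubset ha)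
  rw [IsDeficient, card_erase_of_mem ha] at h
  omega

lemma exists_pair_of_minimal (hS : Minimal (IsDeficient H) S) {b : B}
    (hb : b ∈ neighbors H S) : ∃ P ∈ S.powersetCard 2, ∀ a ∈ P, H a b := by
  classical
  obtain ⟨a, ha, hab⟩ := mem_neighbors.mp hb
  suffices ∃ a' ∈ S, a' ≠ a ∧ H a' b by
    obtain ⟨a', ha', hne, hab'⟩ := this
    exact ⟨{a', a}, by simp [mem_powersetCard, insert_subset_iff, ha, ha', card_pair hne],
      by simp [hab, hab']⟩
  by_contra! hunique
  have hsub : neighbors H (S.erase a) ⊆ (neighbors H S).erase b := fun b' hb' ↦ by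
    obtain ⟨a', ha', hab'⟩ := mem_neighbors.mp hb'
    refine mem_erase.mpr ⟨?_, neighbors_mono (erase_subset a S) hb'⟩
    rintro rfl
    exact hunique a' (mem_of_mem_erase ha') (ne_of_mem_erase ha') hab'
  have hle := card_le_card_neighbors_erase_of_minimal hS ha
  have hlt : #(neighbors H S) < #S := hS.prop
  have hsub_card := card_le_card hsub
  have hpos : 0 < #(neighbors H S) := card_pos.mpr ⟨b, hb⟩
  rw [card_erase_of_mem hb] at hsub_card
  omega

lemma isHallObstruction_of_minimal (hS : Minimal (IsDeficient H) S) :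
    IsHallObstruction H S (neighbors H S) where
  card_eq := by
    classical
    have hlt : #(neighbors H S) < #S := hS.prop
    obtain ⟨a, ha⟩ : S.Nonempty := card_pos.mp (by omega)
    have hle := card_le_card_neighbors_erase_of_minimal hS ha
    have hmono := card_le_card (neighbors_mono (H := H) (erase_subset a S))
    omega
  not_adj a ha b hb hab := hb (mem_neighbors.mpr ⟨a, ha, hab⟩)
  exists_pair _ hb := exists_pair_of_minimal hS hb

lemma IsDeficient.exists_isHallObstruction (h : IsDeficient H S) :
    ∃ S' ⊆ S, ∃ T, IsHallObstruction H S' T := by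
  obtain ⟨S', hS'S, hmin⟩ := exists_minimal_le_of_wellFoundedLT _ S h
  exact ⟨S', hS'S, _, isHallObstruction_of_minimal hmin⟩

variable [Fintype A]

lemma IsHallObstruction.isDeficient_flip_compl [DecidableEq B] (h : IsHallObstruction H S T)
    (hcard : Fintype.card A = Fintype.card B) : IsDeficient (flip H) Tᶜ := by
  classical
  have hsub : neighbors (flip H) Tᶜ ⊆ Sᶜ := fun a ha ↦ by
    obtain ⟨b, hb, hab⟩ := mem_neighbors.mp ha
    exact mem_compl.mpr fun haS ↦ h.not_adj a haS b (mem_compl.mp hb) hab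
  have hle := card_le_card hsub
  have hS := card_le_univ S
  have hST := h.card_eq
  rw [card_compl] at hle
  rw [IsDeficient, card_compl]
  omega

lemma exists_equiv_of_forall_not_isDeficient (hcard : Fintype.card A = Fintype.card B)
    (h : ∀ S, ¬ IsDeficient H S) : ∃ σ : A ≃ B, ∀ a, H a (σ a) := by
  classical
  obtain ⟨f, hinj, hf⟩ := (Fintype.all_card_le_filter_rel_iff_exists_injective H).mp fun S ↦ by
    simpa [IsDeficient, neighbors] using h S
  exact ⟨.ofBijective f ((Fintype.bijective_iff_injective_and_card f).mpr ⟨hinj, hcard⟩), hf⟩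

lemma exists_small_isHallObstruction (hA : Fintype.card A = n) (hB : Fintype.card B = n)
    (h : ¬ ∃ σ : A ≃ B, ∀ a, H a (σ a)) :
    (∃ S T, 2 * #T < n ∧ IsHallObstruction H S T) ∨
      ∃ S T, 2 * #T < n ∧ IsHallObstruction (flip H) S T := by
  classical
  have hcard := hA.trans hB.symm
  obtain ⟨S₀, hS₀⟩ : ∃ S, IsDeficient H S := by
    by_contra! hno
    exact h (exists_equiv_of_forall_not_isDeficient hcard hno)
  obtain ⟨S, -, T, hST⟩ := hS₀.exists_isHallObstruction
  by_cases hT : 2 * #T < n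
  · exact .inl ⟨S, T, hT, hST⟩
  · obtain ⟨S', hS'T, T', hST'⟩ := (hST.isDeficient_flip_compl hcard).exists_isHallObstruction
    have hle := card_le_card hS'T
    have hTn := card_le_univ T
    rw [card_compl] at hle
    have hS' := hST'.card_eq
    exact .inr ⟨S', T', by omega, hST'⟩

end HallObstruction

section ObstructionBound

/-- A bound for the expected number of Hall obstructions `(S, T)` with `#T = j`, in a random
bipartite graph with parts of size `n` whose edges are independent and have probabilities in
`[r, s]`. -/
noncomputable def obstructionBound (n j : ℕ) (r s : ℝ) : ℝ :=
  n.choose (j + 1) * n.choose j *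
    ((j + 1).choose 2 ^ j * (Real.exp (-(r * ((j + 1) * (n - j) : ℕ))) * (s ^ 2) ^ j))

lemma choose_mul_choose_mul_choose_two_pow_le (n j : ℕ) :
    (n.choose (j + 1) * n.choose j * (j + 1).choose 2 ^ j : ℝ) ≤
      n * Real.exp 2 * ((n * Real.exp 1) ^ 2 / 2) ^ j := by
  have hpow_le_exp (k : ℕ) : ((j + 1) ^ k / k.factorial : ℝ) ≤ Real.exp (j + 1) :=
    Real.pow_div_factorial_le_exp _ (by positivity) k
  have hchoose_two : ((j + 1).choose 2 : ℝ) ≤ (j + 1) ^ 2 / 2 := by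
    exact_mod_cast Nat.choose_le_pow_div (α := ℝ) 2 (j + 1)
  calc (n.choose (j + 1) * n.choose j * (j + 1).choose 2 ^ j : ℝ)
      ≤ n ^ (j + 1) / (j + 1).factorial * (n ^ j / j.factorial) * ((j + 1) ^ 2 / 2) ^ j := by
        gcongr
        · exact Nat.choose_le_pow_div _ _
        · exact Nat.choose_le_pow_div _ _
    _ = n * (n ^ 2 / 2) ^ j *
          ((j + 1) ^ (j + 1) / (j + 1).factorial * ((j + 1) ^ j / j.factorial)) / (j + 1) := by
        simp only [div_pow, ← pow_mul]
        field_simp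
        ring
    _ ≤ n * (n ^ 2 / 2) ^ j *
          ((j + 1) ^ (j + 1) / (j + 1).factorial * ((j + 1) ^ j / j.factorial)) :=
        div_le_self (by positivity) (by linarith [j.cast_nonneg (α := ℝ)])
    _ ≤ n * (n ^ 2 / 2) ^ j * (Real.exp (j + 1) * Real.exp (j + 1)) := by
        gcongr
        exacts [hpow_le_exp _, hpow_le_exp _]
    _ = n * Real.exp 2 * ((n * Real.exp 1) ^ 2 / 2) ^ j := by
        have hexp : Real.exp (j + 1) = Real.exp 1 ^ j * Real.exp 1 := by
          rw [← pow_succ, ← Real.exp_nat_mul]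
          simp
        have hexp_two : Real.exp 2 = Real.exp 1 ^ 2 := by
          rw [← Real.exp_nat_mul]
          simp
        rw [hexp, hexp_two]
        ring

lemma add_mul_div_three_le_mul_sub {n j : ℕ} (hj : 2 * j < n) :
    (n + j * (n / 3) : ℝ) ≤ ((j + 1) * (n - j) : ℕ) := by
  obtain ⟨k, rfl⟩ := Nat.exists_eq_add_of_lt hj
  rw [show 2 * j + k + 1 - j = j + k + 1 by omega]
  push_cast
  rcases j.eq_zero_or_pos with rfl | hpos
  · simp
  · have hj_one : (1 : ℝ) ≤ j := by exact_mod_cast hpos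
    nlinarith [k.cast_nonneg (α := ℝ)]

lemma obstructionBound_le {n j : ℕ} {r s : ℝ} (hj : 2 * j < n) (hr : 0 ≤ r)
    (hs : (Real.exp 1 * (n * s)) ^ 2 ≤ Real.exp (n * r / 3)) :
    obstructionBound n j r s ≤ n * Real.exp 2 * Real.exp (-(n * r)) * (1 / 2) ^ j := by
  have hexp : Real.exp (-(r * ((j + 1) * (n - j) : ℕ))) ≤
      Real.exp (-(n * r)) * Real.exp (-(n * r / 3)) ^ j := by
    rw [← Real.exp_nat_mul, ← Real.exp_add, Real.exp_le_exp]
    linarith [mul_le_mul_of_nonneg_left (add_mul_div_three_le_mul_sub hj) hr]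
  have hratio : (Real.exp 1 * (n * s)) ^ 2 * Real.exp (-(n * r / 3)) ≤ 1 := by
    rwa [Real.exp_neg, ← div_eq_mul_inv, div_le_one (Real.exp_pos _)]
  calc obstructionBound n j r s
      = (n.choose (j + 1) * n.choose j * (j + 1).choose 2 ^ j) *
          (Real.exp (-(r * ((j + 1) * (n - j) : ℕ))) * (s ^ 2) ^ j) := by
        exact (mul_assoc _ _ _).symm
    _ ≤ (n * Real.exp 2 * ((n * Real.exp 1) ^ 2 / 2) ^ j) *
          ((Real.exp (-(n * r)) * Real.exp (-(n * r / 3)) ^ j) * (s ^ 2) ^ j) := by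
        refine mul_le_mul (choose_mul_choose_mul_choose_two_pow_le n j) ?_ (by positivity)
          (by positivity)
        gcongr
    _ = n * Real.exp 2 * Real.exp (-(n * r)) *
          ((Real.exp 1 * (n * s)) ^ 2 * Real.exp (-(n * r / 3)) * (1 / 2)) ^ j := by
        ring
    _ ≤ n * Real.exp 2 * Real.exp (-(n * r)) * (1 / 2) ^ j := by
        gcongr
        linarith

lemma sum_obstructionBound_le {n : ℕ} {r s : ℝ} (hr : 0 ≤ r)
    (hs : (Real.exp 1 * (n * s)) ^ 2 ≤ Real.exp (n * r / 3)) :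
    ∑ j ∈ range ((n + 1) / 2), obstructionBound n j r s ≤
      2 * (n * Real.exp 2 * Real.exp (-(n * r))) :=
  calc ∑ j ∈ range ((n + 1) / 2), obstructionBound n j r s
      ≤ ∑ j ∈ range ((n + 1) / 2), n * Real.exp 2 * Real.exp (-(n * r)) * (1 / 2) ^ j :=
        sum_le_sum fun j hj ↦ obstructionBound_le (by have := mem_range.mp hj; omega) hr hs
    _ = n * Real.exp 2 * Real.exp (-(n * r)) * ∑ j ∈ range ((n + 1) / 2), (1 / 2 : ℝ) ^ j := by
        rw [mul_sum]
    _ ≤ n * Real.exp 2 * Real.exp (-(n * r)) * 2 := by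
        gcongr
        exact sum_geometric_two_le _
    _ = 2 * (n * Real.exp 2 * Real.exp (-(n * r))) := mul_comm _ _

end ObstructionBound

section RandomBipartiteGraph

open ProbabilityTheory

variable {Ω A B : Type*} {S : Finset A} {T : Finset B}

/-- The edges of the bipartite graph in which each `b ∈ T` has neighborhood `P b`. -/
def starEdges [DecidableEq A] [DecidableEq B] (P : T → Finset A) : Finset (A × B) :=
  univ.biUnion fun b ↦ P b ×ˢ {b.1}

lemma mem_starEdges [DecidableEq A] [DecidableEq B] {P : T → Finset A} {e : A × B} :
    e ∈ starEdges P ↔ ∃ b : T, e.1 ∈ P b ∧ e.2 = b := by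
  simp only [starEdges, mem_biUnion, mem_univ, true_and, mem_product, mem_singleton]

lemma card_starEdges [DecidableEq A] [DecidableEq B] (P : T → Finset A) :
    #(starEdges P) = ∑ b, #(P b) := by
  rw [starEdges, card_biUnion]
  · simp
  · intro b _ b' _ hne
    exact disjoint_product.mpr (.inr (disjoint_singleton.mpr (Subtype.val_injective.ne hne)))

variable [Fintype B] {E : A × B → Set Ω}

lemma setOf_isHallObstruction_subset [DecidableEq A] [DecidableEq B] :
    {ω | IsHallObstruction (fun a b ↦ ω ∈ E (a, b)) S T} ⊆
      ⋃ P ∈ (univ : Finset (T → S.powersetCard 2)),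
        (⋂ e ∈ S ×ˢ Tᶜ, (E e)ᶜ) ∩ ⋂ e ∈ starEdges fun b ↦ (P b).1, E e := by
  intro ω hω
  choose P hP hadj using fun b : T ↦ hω.exists_pair b b.2
  simp only [Set.mem_iUnion, Set.mem_inter_iff, Set.mem_iInter, Set.mem_compl_iff]
  refine ⟨fun b ↦ ⟨P b, hP b⟩, mem_univ _, fun e he ↦ ?_, fun e he ↦ ?_⟩
  · obtain ⟨ha, hb⟩ := mem_product.mp he
    exact hω.not_adj _ ha _ (mem_compl.mp hb)
  · obtain ⟨b, ha, hb⟩ := mem_starEdges.mp he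
    have hmem := hadj b e.1 ha
    rwa [← hb] at hmem

variable [MeasurableSpace Ω] {μ : Measure Ω} {r s : ℝ}

lemma measureReal_iInter_compl_inter_iInter_le {ι : Type*} {E : ι → Set Ω}
    (hE : ∀ e, MeasurableSet (E e)) (hind : iIndepSet E μ) (hr : ∀ e, r ≤ μ.real (E e))
    (hs : ∀ e, μ.real (E e) ≤ s) {X Y : Finset ι} (hXY : Disjoint X Y) :
    μ.real ((⋂ e ∈ X, (E e)ᶜ) ∩ ⋂ e ∈ Y, E e) ≤ Real.exp (-(r * #X)) * s ^ #Y := by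
  classical
  have := hind.isProbabilityMeasure
  let F : ι → Set Ω := fun e ↦ if e ∈ X then (E e)ᶜ else E e
  have hFX : ∀ e ∈ X, F e = (E e)ᶜ := fun e he ↦ if_pos he
  have hFY : ∀ e ∈ Y, F e = E e := fun e he ↦ if_neg (disjoint_right.mp hXY he)
  have hF : ∀ e ∈ X ∪ Y, MeasurableSet[.generateFrom {E e}] (F e) := fun e _ ↦ by
    have hgen := MeasurableSpace.measurableSet_generateFrom (Set.mem_singleton (E e))
    by_cases he : e ∈ X
    · simpa only [F, if_pos he] using hgen.compl
    · simpa only [F, if_neg he] using hgen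
  have hcompl : ∀ e, μ.real (E e)ᶜ ≤ Real.exp (-r) := fun e ↦ by
    rw [probReal_compl_eq_one_sub (hE e)]
    linarith [hr e, Real.one_sub_le_exp_neg r]
  calc μ.real ((⋂ e ∈ X, (E e)ᶜ) ∩ ⋂ e ∈ Y, E e)
      = μ.real (⋂ e ∈ X ∪ Y, F e) := by
        rw [Finset.set_biInter_inter, Set.iInter₂_congr hFX, Set.iInter₂_congr hFY]
    _ = (∏ e ∈ X, μ.real (F e)) * ∏ e ∈ Y, μ.real (F e) := by
        rw [Measure.real, (iIndepSet_iff E μ).mp hind _ hF, ENNReal.toReal_prod,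
          prod_union hXY]
        rfl
    _ = (∏ e ∈ X, μ.real (E e)ᶜ) * ∏ e ∈ Y, μ.real (E e) := by
        congr 1
        · exact prod_congr rfl fun e he ↦ by rw [hFX e he]
        · exact prod_congr rfl fun e he ↦ by rw [hFY e he]
    _ ≤ (∏ _e ∈ X, Real.exp (-r)) * ∏ _e ∈ Y, s := by
        gcongr with e _ e _
        exacts [hcompl e, hs e]
    _ = Real.exp (-(r * #X)) * s ^ #Y := by
        rw [prod_const, prod_const, ← Real.exp_nat_mul]
        ring_nf

lemma measureReal_isHallObstruction_le [DecidableEq B] (hE : ∀ e, MeasurableSet (E e))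
    (hind : iIndepSet E μ) (hr : ∀ e, r ≤ μ.real (E e)) (hs : ∀ e, μ.real (E e) ≤ s) :
    μ.real {ω | IsHallObstruction (fun a b ↦ ω ∈ E (a, b)) S T} ≤
      (#S).choose 2 ^ #T * (Real.exp (-(r * (#S * #Tᶜ : ℕ))) * (s ^ 2) ^ #T) := by
  classical
  have := hind.isProbabilityMeasure
  have hdisj (P : T → Finset A) : Disjoint (S ×ˢ Tᶜ) (starEdges P) := by
    rw [disjoint_right]
    intro e he hmem
    obtain ⟨b, -, hb⟩ := mem_starEdges.mp he
    exact mem_compl.mp (mem_product.mp hmem).2 (hb ▸ b.2)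
  have hcard (P : T → S.powersetCard 2) : #(starEdges fun b ↦ (P b).1) = 2 * #T := by
    have hP (b : T) : #(P b).1 = 2 := (mem_powersetCard.mp (P b).2).2
    simp [card_starEdges, hP, mul_comm]
  calc μ.real {ω | IsHallObstruction (fun a b ↦ ω ∈ E (a, b)) S T}
      ≤ ∑ P : T → S.powersetCard 2,
          μ.real ((⋂ e ∈ S ×ˢ Tᶜ, (E e)ᶜ) ∩ ⋂ e ∈ starEdges fun b ↦ (P b).1, E e) :=
        (measureReal_mono setOf_isHallObstruction_subset (measure_ne_top _ _)).trans
          (measureReal_biUnion_finset_le _ _)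
    _ ≤ ∑ _P : T → S.powersetCard 2,
          Real.exp (-(r * (#S * #Tᶜ : ℕ))) * (s ^ 2) ^ #T := by
        gcongr with P
        rw [← pow_mul, ← hcard P, ← card_product]
        exact measureReal_iInter_compl_inter_iInter_le hE hind hr hs (hdisj _)
    _ = (#S).choose 2 ^ #T * (Real.exp (-(r * (#S * #Tᶜ : ℕ))) * (s ^ 2) ^ #T) := by
        simp only [sum_const, card_univ, Fintype.card_fun, Fintype.card_coe, card_powersetCard,
          nsmul_eq_mul, Nat.cast_pow]

variable [Fintype A] {n : ℕ}

lemma measureReal_exists_small_isHallObstruction_le (hA : Fintype.card A = n)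
    (hB : Fintype.card B = n) (hE : ∀ e, MeasurableSet (E e)) (hind : iIndepSet E μ)
    (hr : ∀ e, r ≤ μ.real (E e)) (hs : ∀ e, μ.real (E e) ≤ s) :
    μ.real {ω | ∃ S T, 2 * #T < n ∧ IsHallObstruction (fun a b ↦ ω ∈ E (a, b)) S T} ≤
      ∑ j ∈ range ((n + 1) / 2), obstructionBound n j r s := by
  classical
  have := hind.isProbabilityMeasure
  let pairs (j : ℕ) : Finset (Finset A × Finset B) :=
    univ.powersetCard (j + 1) ×ˢ univ.powersetCard j
  have hsub : {ω | ∃ S T, 2 * #T < n ∧ IsHallObstruction (fun a b ↦ ω ∈ E (a, b)) S T} ⊆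
      ⋃ j ∈ range ((n + 1) / 2), ⋃ ST ∈ pairs j,
        {ω | IsHallObstruction (fun a b ↦ ω ∈ E (a, b)) ST.1 ST.2} := by
    rintro ω ⟨S, T, hT, hST⟩
    refine Set.mem_biUnion (x := #T) (mem_coe.mpr (mem_range.mpr (by omega))) ?_
    exact Set.mem_biUnion (x := (S, T)) (by simp [pairs, hST.card_eq]) hST
  have hpair (j : ℕ) (ST : Finset A × Finset B) (hST : ST ∈ pairs j) :
      μ.real {ω | IsHallObstruction (fun a b ↦ ω ∈ E (a, b)) ST.1 ST.2} ≤
        (j + 1).choose 2 ^ j *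
          (Real.exp (-(r * ((j + 1) * (n - j) : ℕ))) * (s ^ 2) ^ j) := by
    simp only [pairs, mem_product, mem_powersetCard_univ] at hST
    simpa only [card_compl, hB, hST.1, hST.2] using
      measureReal_isHallObstruction_le hE hind hr hs (S := ST.1) (T := ST.2)
  refine (measureReal_mono hsub (measure_ne_top _ _)).trans ?_
  refine (measureReal_biUnion_finset_le _ _).trans ?_
  refine sum_le_sum fun j _ ↦ (measureReal_biUnion_finset_le _ _).trans ?_
  refine (sum_le_card_nsmul _ _ _ (hpair j)).trans_eq ?_
  simp only [pairs, card_product, card_powersetCard, card_univ, hA, hB, nsmul_eq_mul,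
    Nat.cast_mul, obstructionBound]

lemma measureReal_not_exists_matching_le_sum (hA : Fintype.card A = n) (hB : Fintype.card B = n)
    (hE : ∀ e, MeasurableSet (E e)) (hind : iIndepSet E μ) (hr : ∀ e, r ≤ μ.real (E e))
    (hs : ∀ e, μ.real (E e) ≤ s) :
    μ.real {ω | ¬ ∃ σ : A ≃ B, ∀ a, ω ∈ E (a, σ a)} ≤
      2 * ∑ j ∈ range ((n + 1) / 2), obstructionBound n j r s := by
  have := hind.isProbabilityMeasure
  have hsub : {ω | ¬ ∃ σ : A ≃ B, ∀ a, ω ∈ E (a, σ a)} ⊆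
      {ω | ∃ S T, 2 * #T < n ∧ IsHallObstruction (fun a b ↦ ω ∈ E (a, b)) S T} ∪
      {ω | ∃ S T, 2 * #T < n ∧ IsHallObstruction (fun b a ↦ ω ∈ E (a, b)) S T} :=
    fun _ hω ↦ exists_small_isHallObstruction hA hB hω
  have hleft := measureReal_exists_small_isHallObstruction_le hA hB hE hind hr hs
  have hright := measureReal_exists_small_isHallObstruction_le hB hA (fun e ↦ hE e.swap)
    (hind.precomp Prod.swap_injective) (fun e ↦ hr e.swap) (fun e ↦ hs e.swap)
  rw [two_mul]
  exact (measureReal_mono hsub (measure_ne_top _ _)).trans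
    ((measureReal_union_le _ _).trans (add_le_add hleft hright))

lemma measureReal_not_exists_matching_le (hA : Fintype.card A = n) (hB : Fintype.card B = n)
    (hE : ∀ e, MeasurableSet (E e)) (hind : iIndepSet E μ) (hr₀ : 0 ≤ r)
    (hr : ∀ e, r ≤ μ.real (E e)) (hs : ∀ e, μ.real (E e) ≤ s)
    (hrs : (Real.exp 1 * (n * s)) ^ 2 ≤ Real.exp (n * r / 3)) :
    μ.real {ω | ¬ ∃ σ : A ≃ B, ∀ a, ω ∈ E (a, σ a)} ≤
      4 * Real.exp 2 * (n * Real.exp (-(n * r))) := by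
  linarith [measureReal_not_exists_matching_le_sum hA hB hE hind hr hs,
    sum_obstructionBound_le hr₀ hrs]

end RandomBipartiteGraph

section ColorProfiles

variable {ι : Type*} [DecidableEq ι]

lemma exists_forall_card_fiber_eq {V : Type*} [Fintype V] [Fintype ι] {m : ι → ℕ}
    (hm : ∑ i, m i = Fintype.card V) :
    ∃ c : V → ι, ∀ i, #{a | c a = i} = m i := by
  let e : V ≃ Σ i, Fin (m i) := Fintype.equivOfCardEq (by simp [hm])
  refine ⟨fun a ↦ (e a).1, fun i ↦ ?_⟩
  rw [← Fintype.card_subtype, ← Fintype.card_fin (m i)]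
  exact Fintype.card_congr ((e.subtypeEquiv fun _ ↦ Iff.rfl).trans (Equiv.sigmaSubtype i))

lemma card_piAntidiag_le {s : Finset ι} (hs : s.Nonempty) {n : ℕ} (hn : 1 ≤ n) :
    #(s.piAntidiag n) ≤ (#s * n) ^ (#s - 1) := by
  have hs_pos : 1 ≤ #s := hs.card_pos
  calc #(s.piAntidiag n) = #(s.finsuppAntidiag n) := by
        rw [finsuppAntidiag, card_map, card_attach]
    _ = (#s - 1 + n).choose (#s - 1) := by
        rw [card_finsuppAntidiag_nat_eq_choose, ← Nat.sub_add_comm hs_pos]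
        exact Nat.choose_symm_of_eq_add (by omega)
    _ ≤ (#s - 1 + n) ^ (#s - 1) := Nat.choose_le_pow _ _
    _ ≤ (#s * n) ^ (#s - 1) := by
        gcongr
        nlinarith [Nat.sub_add_cancel hs_pos]

end ColorProfiles

section ColoredGraph

open ProbabilityTheory

variable {q n : ℕ} {α : Fin q → ℝ} {p r : ℝ}

lemma isProbabilityMeasure_colorM (hα : ∀ i, 0 ≤ α i) (hsum : ∑ i, α i = 1) (hp₀ : 0 ≤ p)
    (hp₁ : p ≤ 1) : IsProbabilityMeasure (colorM q α p) := by
  have hnonneg : ∀ i ∈ univ, 0 ≤ α i * p := fun i _ ↦ mul_nonneg (hα i) hp₀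
  constructor
  simp only [colorM, Measure.add_apply, Measure.smul_apply, Measure.finsetSum_apply, measure_univ,
    smul_eq_mul, mul_one]
  rw [← ENNReal.ofReal_sum_of_nonneg hnonneg,
    ← ENNReal.ofReal_add (by linarith) (sum_nonneg hnonneg), ← sum_mul, hsum]
  simp

lemma colorM_real_singleton_some {i : Fin q} (hi : 0 ≤ α i * p) :
    (colorM q α p).real {some i} = α i * p := by
  have hmeasure : colorM q α p {some i} = ENNReal.ofReal (α i * p) := by
    simp only [colorM, Measure.add_apply, Measure.smul_apply, Measure.finsetSum_apply, smul_eq_mul]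
    rw [sum_eq_single_of_mem i (mem_univ i) fun j _ hj ↦ by simp [hj]]
    simp
  rw [Measure.real, hmeasure, ENNReal.toReal_ofReal hi]

lemma isProbabilityMeasure_graphM (hα : ∀ i, 0 ≤ α i) (hsum : ∑ i, α i = 1) (hp₀ : 0 ≤ p)
    (hp₁ : p ≤ 1) : IsProbabilityMeasure (graphM n q α p) := by
  have := isProbabilityMeasure_colorM hα hsum hp₀ hp₁
  unfold graphM
  infer_instance

lemma iIndepSet_graphM (hα : ∀ i, 0 ≤ α i) (hsum : ∑ i, α i = 1) (hp₀ : 0 ≤ p) (hp₁ : p ≤ 1)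
    (x : Fin n × Fin n → Option (Fin q)) :
    iIndepSet (fun e ↦ {f | f e = x e}) (graphM n q α p) := by
  have := isProbabilityMeasure_colorM hα hsum hp₀ hp₁
  have hind : iIndepFun (fun e f ↦ f e) (graphM n q α p) :=
    iIndepFun_pi fun _ ↦ aemeasurable_id
  rw [iIndepSet_iff_meas_biInter fun _ ↦ .of_discrete]
  intro s
  exact hind.measure_inter_preimage_eq_mul s (sets := fun e ↦ {x e}) fun _ _ ↦ .of_discrete

lemma graphM_real_eq_some (hα : ∀ i, 0 ≤ α i) (hsum : ∑ i, α i = 1) (hp₀ : 0 ≤ p) (hp₁ : p ≤ 1)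
    (e : Fin n × Fin n) (i : Fin q) : (graphM n q α p).real {f | f e = some i} = α i * p := by
  have := isProbabilityMeasure_colorM hα hsum hp₀ hp₁
  rw [← colorM_real_singleton_some (mul_nonneg (hα i) hp₀)]
  exact (measurePreserving_eval (fun _ ↦ colorM q α p) e).measureReal_preimage
    (s := {some i}) MeasurableSet.of_discrete.nullMeasurableSet

/-- The vector `m` belongs to the perfect matching color profile of the edge-colored bipartite
graph `f`: some perfect matching, encoded as a permutation, has exactly `m i` edges of each
color `i`. -/
def HasColorProfile (f : Fin n × Fin n → Option (Fin q)) (m : Fin q → ℕ) : Prop :=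
  ∃ σ : Equiv.Perm (Fin n), (∀ a, f (a, σ a) ≠ none) ∧ ∀ i, #{a | f (a, σ a) = some i} = m i

lemma HasColorProfile.of_perm {f : Fin n × Fin n → Option (Fin q)} {m : Fin q → ℕ}
    {c : Fin n → Fin q} (hc : ∀ i, #{a | c a = i} = m i) {σ : Equiv.Perm (Fin n)}
    (hσ : ∀ a, f (a, σ a) = some (c a)) : HasColorProfile f m :=
  ⟨σ, fun a ↦ by simp [hσ], fun i ↦ by simpa only [hσ, Option.some_inj] using hc i⟩

lemma graphM_real_not_hasColorProfile_le (hα : ∀ i, 0 ≤ α i) (hsum : ∑ i, α i = 1) (hp₀ : 0 ≤ p)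
    (hp₁ : p ≤ 1) (hr₀ : 0 ≤ r) (hr : ∀ i, r ≤ α i * p)
    (hrp : (Real.exp 1 * (n * p)) ^ 2 ≤ Real.exp (n * r / 3)) {m : Fin q → ℕ}
    (hm : ∑ i, m i = n) :
    (graphM n q α p).real {f | ¬ HasColorProfile f m} ≤
      4 * Real.exp 2 * (n * Real.exp (-(n * r))) := by
  have := isProbabilityMeasure_graphM (n := n) hα hsum hp₀ hp₁
  obtain ⟨c, hc⟩ := exists_forall_card_fiber_eq (hm.trans (Fintype.card_fin n).symm)
  have hα₁ (i : Fin q) : α i ≤ 1 :=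
    (single_le_sum (fun j _ ↦ hα j) (mem_univ i)).trans_eq hsum
  let E : Fin n × Fin n → Set (Fin n × Fin n → Option (Fin q)) :=
    fun e ↦ {f | f e = some (c e.1)}
  have hE (e : Fin n × Fin n) : (graphM n q α p).real (E e) = α (c e.1) * p :=
    graphM_real_eq_some hα hsum hp₀ hp₁ e _
  have hsub : {f | ¬ HasColorProfile f m} ⊆
      {f | ¬ ∃ σ : Equiv.Perm (Fin n), ∀ a, f ∈ E (a, σ a)} :=
    fun f hf ⟨_, hσ⟩ ↦ hf (.of_perm hc hσ)
  refine (measureReal_mono hsub).trans ?_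
  exact measureReal_not_exists_matching_le (Fintype.card_fin n) (Fintype.card_fin n)
    (fun _ ↦ .of_discrete) (iIndepSet_graphM hα hsum hp₀ hp₁ _) hr₀
    (fun e ↦ (hr _).trans_eq (hE e).symm)
    (fun e ↦ (hE e).trans_le (mul_le_of_le_one_left hp₀ (hα₁ _))) hrp

lemma graphM_real_compl_forall_hasColorProfile_le (hα : ∀ i, 0 ≤ α i) (hsum : ∑ i, α i = 1)
    (hp₀ : 0 ≤ p) (hp₁ : p ≤ 1) (hr₀ : 0 ≤ r) (hr : ∀ i, r ≤ α i * p)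
    (hrp : (Real.exp 1 * (n * p)) ^ 2 ≤ Real.exp (n * r / 3)) (hq : 1 ≤ q) (hn : 1 ≤ n) :
    (graphM n q α p).real {f | ∀ m : Fin q → ℕ, ∑ i, m i = n → HasColorProfile f m}ᶜ ≤
      4 * Real.exp 2 * q ^ (q - 1) * (n ^ q * Real.exp (-(n * r))) := by
  have := isProbabilityMeasure_graphM (n := n) hα hsum hp₀ hp₁
  have hsub : {f : Fin n × Fin n → Option (Fin q) |
        ∀ m : Fin q → ℕ, ∑ i, m i = n → HasColorProfile f m}ᶜ ⊆
      ⋃ m ∈ piAntidiag univ n, {f | ¬ HasColorProfile f m} := fun f hf ↦ by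
    obtain ⟨m, hm, hfm⟩ : ∃ m : Fin q → ℕ, ∑ i, m i = n ∧ ¬ HasColorProfile f m := by
      simpa only [Set.mem_compl_iff, Set.mem_ofPred_eq, not_forall, exists_prop] using hf
    exact Set.mem_biUnion (x := m) (by simpa using hm) hfm
  have hsingle (m : Fin q → ℕ) (hm : m ∈ piAntidiag univ n) :=
    graphM_real_not_hasColorProfile_le hα hsum hp₀ hp₁ hr₀ hr hrp (mem_piAntidiag.mp hm).1
  have hcard : (#(piAntidiag (univ : Finset (Fin q)) n) : ℝ) ≤ (q * n) ^ (q - 1) := by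
    have hne : (univ : Finset (Fin q)).Nonempty := ⟨⟨0, hq⟩, mem_univ _⟩
    exact_mod_cast card_fin q ▸ card_piAntidiag_le hne hn
  calc (graphM n q α p).real {f | ∀ m : Fin q → ℕ, ∑ i, m i = n → HasColorProfile f m}ᶜ
      ≤ ∑ m ∈ piAntidiag univ n, (graphM n q α p).real {f | ¬ HasColorProfile f m} :=
        (measureReal_mono hsub (measure_ne_top _ _)).trans (measureReal_biUnion_finset_le _ _)
    _ ≤ #(piAntidiag (univ : Finset (Fin q)) n) *
          (4 * Real.exp 2 * (n * Real.exp (-(n * r)))) := by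
        rw [← nsmul_eq_mul]
        exact sum_le_card_nsmul _ _ _ hsingle
    _ ≤ (q * n) ^ (q - 1) * (4 * Real.exp 2 * (n * Real.exp (-(n * r)))) := by gcongr
    _ = 4 * Real.exp 2 * q ^ (q - 1) * (n ^ q * Real.exp (-(n * r))) := by
        rw [mul_pow, ← pow_sub_one_mul (by omega : q ≠ 0) (n : ℝ)]
        ring

end ColoredGraph

section Asymptotics

lemma natCast_pow_mul_exp_neg_le {q n : ℕ} (hn : n ≠ 0) {w x : ℝ}
    (hx : q * (Real.log n + w) ≤ x) :
    n ^ q * Real.exp (-x) ≤ Real.exp (-(q * w)) := by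
  have hn_pos : (0 : ℝ) < n := by exact_mod_cast Nat.pos_of_ne_zero hn
  rw [← Real.exp_log (pow_pos hn_pos q), ← Real.exp_add, Real.exp_le_exp, Real.log_pow]
  linarith

lemma eventually_exp_one_mul_sq_le_exp {c : ℝ} (hc : 0 < c) :
    ∀ᶠ x : ℝ in atTop, (Real.exp 1 * x) ^ 2 ≤ Real.exp (c * x) := by
  have hlittle := (isLittleO_pow_exp_pos_mul_atTop 2 hc).const_mul_left (Real.exp 1 ^ 2)
  filter_upwards [hlittle.eventuallyLE] with x hx
  rwa [← mul_pow, Real.norm_of_nonneg (by positivity), Real.norm_of_nonneg (by positivity)] at hx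

lemma tendsto_measure_one_of_measureReal_compl_le {ι : Type*} {l : Filter ι} {Ω : ι → Type*}
    [∀ i, MeasurableSpace (Ω i)] {μ : ∀ i, Measure (Ω i)} {S : ∀ i, Set (Ω i)} {b : ι → ℝ}
    (hμ : ∀ᶠ i in l, IsProbabilityMeasure (μ i)) (hS : ∀ i, MeasurableSet (S i))
    (hle : ∀ᶠ i in l, (μ i).real (S i)ᶜ ≤ b i) (hb : Tendsto b l (nhds 0)) :
    Tendsto (fun i ↦ μ i (S i)) l (nhds 1) := by
  have hcompl : Tendsto (fun i ↦ (μ i).real (S i)ᶜ) l (nhds 0) :=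
    squeeze_zero' (.of_forall fun _ ↦ measureReal_nonneg) hle hb
  have hlim : Tendsto (fun i ↦ ENNReal.ofReal (1 - (μ i).real (S i)ᶜ)) l (nhds 1) := by
    simpa using ENNReal.tendsto_ofReal (hcompl.const_sub 1)
  refine hlim.congr' ?_
  filter_upwards [hμ] with i _
  rw [probReal_compl_eq_one_sub (hS i), sub_sub_cancel, ofReal_measureReal]

variable {q : ℕ} {c : ℝ} {w p : ℕ → ℝ}

lemma tendsto_mul_exp_neg_mul_zero (C : ℝ) (hc : 0 < c) (hw : Tendsto w atTop atTop) :
    Tendsto (fun n ↦ C * Real.exp (-(c * w n))) atTop (nhds 0) := by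
  simpa using
    (Real.tendsto_exp_neg_atTop_nhds_zero.comp (hw.const_mul_atTop hc)).const_mul C

lemma eventually_mul_log_add_le (hc : 0 < c)
    (hp : ∀ n : ℕ, q * (Real.log n + w n) / (c * n) ≤ p n) :
    ∀ᶠ n : ℕ in atTop, q * (Real.log n + w n) ≤ n * (c * p n) := by
  filter_upwards [eventually_gt_atTop 0] with n hn
  have hcn : 0 < c * n := by positivity
  linarith [(div_le_iff₀ hcn).mp (hp n)]

lemma tendsto_natCast_mul_atTop (hq : 1 ≤ q) (hc : 0 < c) (hw : Tendsto w atTop atTop)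
    (hle : ∀ᶠ n : ℕ in atTop, q * (Real.log n + w n) ≤ n * (c * p n)) :
    Tendsto (fun n : ℕ ↦ n * p n) atTop atTop := by
  have hlog : Tendsto (fun n : ℕ ↦ Real.log n) atTop atTop :=
    Real.tendsto_log_atTop.comp tendsto_natCast_atTop_atTop
  have hlower :=
    ((hlog.atTop_add_atTop hw).const_mul_atTop (Nat.cast_pos.mpr hq)).atTop_div_const hc
  refine tendsto_atTop_mono' _ ?_ hlower
  filter_upwards [hle] with n hn
  rw [div_le_iff₀ hc]
  linarith

end Asymptotics

/-- if `q(log n + ω(n))/(α_min n) ≤ p(n) ≤ 1` with `ω(n) → ∞`, then w.h.p. the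
perfect matching color profile consists of all vectors `(m₁,…,m_q)` with `∑ mᵢ = n`. -/
theorem full_color_profile (q : ℕ) (hq : 1 ≤ q) (α : Fin q → ℝ)
    (hα : ∀ i, 0 < α i) (hsum : ∑ i, α i = 1)
    (w : ℕ → ℝ) (hw : Tendsto w atTop atTop)
    (p : ℕ → ℝ)
    (hp : ∀ n : ℕ,
      (q : ℝ) * (Real.log n + w n) /
          ((Finset.univ.inf' ⟨⟨0, by omega⟩, Finset.mem_univ _⟩ α) * n) ≤ p n ∧ p n ≤ 1) :
    Tendsto (fun n =>
      graphM n q α (p n)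
        {f | ∀ m : Fin q → ℕ, (∑ i, m i) = n →
          ∃ σ : Equiv.Perm (Fin n), (∀ a, f (a, σ a) ≠ none) ∧
            ∀ i, (univ.filter fun a => f (a, σ a) = some i).card = m i})
      atTop (nhds 1) := by
  set α₀ : ℝ := Finset.univ.inf' ⟨⟨0, by omega⟩, Finset.mem_univ _⟩ α
  have hα₀ : 0 < α₀ := (lt_inf'_iff _).mpr fun i _ ↦ hα i
  have hα₀_le (i : Fin q) : α₀ ≤ α i := inf'_le _ (mem_univ i)
  have hα_nonneg (i : Fin q) : 0 ≤ α i := (hα i).le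
  have hlarge := eventually_mul_log_add_le hα₀ fun n ↦ (hp n).1
  have hnp := tendsto_natCast_mul_atTop hq hα₀ hw hlarge
  have hp_nonneg : ∀ᶠ n in atTop, 0 ≤ p n := by
    filter_upwards [hnp.eventually_gt_atTop 0] with n hn
    exact (pos_of_mul_pos_right hn n.cast_nonneg).le
  refine tendsto_measure_one_of_measureReal_compl_le ?_ (fun _ ↦ .of_discrete) ?_
    (tendsto_mul_exp_neg_mul_zero (4 * Real.exp 2 * q ^ (q - 1)) (Nat.cast_pos.mpr hq) hw)
  · filter_upwards [hp_nonneg] with n hn using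
      isProbabilityMeasure_graphM hα_nonneg hsum hn (hp n).2
  · filter_upwards [hp_nonneg, hlarge, eventually_gt_atTop 0,
      hnp.eventually (eventually_exp_one_mul_sq_le_exp (div_pos hα₀ three_pos))]
      with n hn hlog hn₁ hexp
    refine (graphM_real_compl_forall_hasColorProfile_le hα_nonneg hsum hn (hp n).2 (by positivity)
      (fun i ↦ mul_le_mul_of_nonneg_right (hα₀_le i) hn) (hexp.trans_eq (by ring_nf))
      hq hn₁).trans ?_
    exact mul_le_mul_of_nonneg_left (natCast_pow_mul_exp_neg_le hn₁.ne' hlog) (by positivity)
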